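/- Holevo capacity bounds: for every n-qudit state σ, n log d − H(M(σ)) ≤ χ(E_σ) ≤ n log d − H(σ), where E_σ is the channel ρ ↦ ρ ⊠ σ. Moreover, if σ is a minimal stabilizer-projection state, then χ(E_σ) = n log d − H(σ). -/

import Mathlib

open scoped BigOperators ComplexOrder Classical ENNReal
open Matrix

namespace PaperQI

/-- The computational-basis index set `ℤ_d^n` for an `n`-qudit system. -/
abbrev QV (d n : ℕ) := Fin n → ZMod d

/-- Matrices (linear operators) on the `n`-qudit Hilbert space `(ℂ^d)^{⊗ n}`,
written in the computational basis indexed by `ℤ_d^n`. -/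
abbrev Mat (d n : ℕ) := Matrix (QV d n) (QV d n) ℂ

/-- The character `ξ^z = exp(2πi z/d)` for `z ∈ ℤ_d`. -/
noncomputable def ch (d : ℕ) (z : ZMod d) : ℂ :=
  Complex.exp (2 * Real.pi * Complex.I * (z.val : ℂ) / (d : ℂ))

/-- Dot product on `ℤ_d^n`. -/
def qdot {d n : ℕ} (p k : QV d n) : ZMod d := ∑ i, p i * k i

/-- The `n`-qudit Weyl operator `w(p,q) = ⊗_i ξ^{-2⁻¹ p_i q_i} Z^{p_i} X^{q_i}`
(for odd prime `d`).  Its matrix entries are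
`w(p,q)[k+q, k] = ξ^{p·k + 2⁻¹ p·q}`. -/
noncomputable def weyl (d n : ℕ) [Fact (Nat.Prime d)] (p q : QV d n) : Mat d n :=
  Matrix.of fun k' k =>
    if k' = k + q then ch d (qdot p k + (2 : ZMod d)⁻¹ * qdot p q) else 0

/-- `ρ` is an `n`-qudit state: positive semidefinite with trace one. -/
def IsState (d n : ℕ) [Fact (Nat.Prime d)] (ρ : Mat d n) : Prop :=
  ρ.PosSemidef ∧ ρ.trace = 1

/-- The characteristic function `Ξ_ρ(p,q) = Tr[ρ w(-p,-q)]`. -/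
noncomputable def xi (d n : ℕ) [Fact (Nat.Prime d)] (ρ : Mat d n)
    (pq : QV d n × QV d n) : ℂ :=
  (ρ * weyl d n (-pq.1) (-pq.2)).trace

/-- The mean state `M(ρ) = d^{-n} ∑_{|Ξ_ρ(p,q)| = 1} Ξ_ρ(p,q) w(p,q)`. -/
noncomputable def meanState (d n : ℕ) [Fact (Nat.Prime d)] (ρ : Mat d n) : Mat d n :=
  ((d : ℂ) ^ n)⁻¹ •
    ∑ pq : QV d n × QV d n,
      if ‖xi d n ρ pq‖ = 1 then xi d n ρ pq • weyl d n pq.1 pq.2 else 0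

/-- `ρ` is a minimal stabilizer-projection state (MSPS): for some `r ≤ n` there are
mutually commuting Weyl operators `w(p_i,q_i)`, `i = 1,…,r`, whose labels generate a
subgroup of `V^n` of order `d^r`, and phases `x ∈ ℤ_d^r`, such that
`ρ = d^{-(n-r)} ∏_i ( (1/d) ∑_{k ∈ ℤ_d} (ξ^{x_i} w(p_i,q_i))^k )`. -/
noncomputable def IsMSPS (d n : ℕ) [Fact (Nat.Prime d)] (ρ : Mat d n) : Prop :=
  ∃ r : ℕ, r ≤ n ∧
    ∃ (p q : Fin r → QV d n) (x : Fin r → ZMod d),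
      (∀ i j, Commute (weyl d n (p i) (q i)) (weyl d n (p j) (q j))) ∧
      Nat.card (AddSubgroup.closure (Set.range fun i => (p i, q i)) :
        AddSubgroup (QV d n × QV d n)) = d ^ r ∧
      ρ = ((d : ℂ) ^ (n - r))⁻¹ •
        (List.ofFn fun i =>
          (d : ℂ)⁻¹ • ∑ k : ZMod d, (ch d (x i) • weyl d n (p i) (q i)) ^ k.val).prod

/-- The magic gap `MG(ρ) = 1 - max{|Ξ_ρ(p,q)| : Ξ_ρ(p,q) ≠ 0, |Ξ_ρ(p,q)| ≠ 1}`,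
and `MG(ρ) = 0` if this set is empty. -/
noncomputable def magicGap (d n : ℕ) [Fact (Nat.Prime d)] (ρ : Mat d n) : ℝ :=
  let s : Finset ℝ :=
    (Finset.univ.filter fun pq : QV d n × QV d n =>
      xi d n ρ pq ≠ 0 ∧ ‖xi d n ρ pq‖ ≠ 1).image
      fun pq => ‖xi d n ρ pq‖
  if h : s.Nonempty then 1 - s.max' h else 0

/-- Von Neumann entropy `H(ρ) = -∑ λ_i log λ_i` (natural log, eigenvalues of `ρ`),
with the convention `0 log 0 = 0`; junk value `0` on non-Hermitian matrices. -/
noncomputable def vnEnt {d n : ℕ} [Fact (Nat.Prime d)] (ρ : Mat d n) : ℝ :=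
  if h : ρ.IsHermitian then -∑ i, h.eigenvalues i * Real.log (h.eigenvalues i) else 0

/-- Rényi entropy `H_α` for `α ∈ [0,∞]`:  `H_0 = log rank`, `H_1 = H` (von Neumann),
`H_∞ = -log λ_max`, and `H_α = (1-α)⁻¹ log ∑ λ_i^α` otherwise. -/
noncomputable def renyiEnt {d n : ℕ} [Fact (Nat.Prime d)] (α : ℝ≥0∞) (ρ : Mat d n) : ℝ :=
  if h : ρ.IsHermitian then
    if α = 0 then Real.log (ρ.rank : ℝ)
    else if α = 1 then -∑ i, h.eigenvalues i * Real.log (h.eigenvalues i)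
    else if α = ⊤ then -Real.log (⨆ i, h.eigenvalues i)
    else (1 - α.toReal)⁻¹ * Real.log (∑ i, h.eigenvalues i ^ α.toReal)
  else 0

/-- Matrix logarithm on the support: `log ρ = U diag(log λ_i) U†` via the spectral
decomposition, with `log 0 = 0` on the kernel; junk value `0` off Hermitian matrices. -/
noncomputable def matLog {d n : ℕ} [Fact (Nat.Prime d)] (ρ : Mat d n) : Mat d n :=
  if h : ρ.IsHermitian then
    (h.eigenvectorUnitary : Mat d n) *
      Matrix.diagonal (fun i => (Real.log (h.eigenvalues i) : ℂ)) *
      star (h.eigenvectorUnitary : Mat d n)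
  else 0

/-- Matrix real power on the support: `ρ^t = U diag(λ_i^t) U†`, with `0^t = 0` on the
kernel (for `t ≠ 0`); junk value `0` off Hermitian matrices. -/
noncomputable def matRpow {d n : ℕ} [Fact (Nat.Prime d)] (ρ : Mat d n) (t : ℝ) : Mat d n :=
  if h : ρ.IsHermitian then
    (h.eigenvectorUnitary : Mat d n) *
      Matrix.diagonal (fun i => ((h.eigenvalues i ^ t : ℝ) : ℂ)) *
      star (h.eigenvectorUnitary : Mat d n)
  else 0

/-- Support inclusion `supp ρ ⊆ supp σ`, expressed as `ker σ ⊆ ker ρ`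
(the correct notion for positive semidefinite matrices). -/
def suppLE {d n : ℕ} [Fact (Nat.Prime d)] (ρ σ : Mat d n) : Prop :=
  ∀ v : QV d n → ℂ, σ.mulVec v = 0 → ρ.mulVec v = 0

/-- Relative entropy `D(ρ‖σ) = Tr[ρ(log ρ - log σ)]` when `supp ρ ⊆ supp σ`, else `+∞`. -/
noncomputable def relEnt {d n : ℕ} [Fact (Nat.Prime d)] (ρ σ : Mat d n) : EReal :=
  if suppLE ρ σ then (((ρ * (matLog ρ - matLog σ)).trace.re : ℝ) : EReal) else ⊤

/-- Sandwiched Rényi relative entropy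
`D_α(ρ‖σ) = (α-1)⁻¹ log Tr[(σ^{(1-α)/(2α)} ρ σ^{(1-α)/(2α)})^α]` for `α ≠ 1`
(with `+∞` when `supp ρ ⊄ supp σ`), and `D_1 = D` the relative entropy. -/
noncomputable def sandRenyi {d n : ℕ} [Fact (Nat.Prime d)] (α : ℝ) (ρ σ : Mat d n) :
    EReal :=
  if α = 1 then relEnt ρ σ
  else if suppLE ρ σ then
    let x : ℝ := (α - 1)⁻¹ * Real.log
      ((matRpow (matRpow σ ((1 - α) / (2 * α)) * ρ * matRpow σ ((1 - α) / (2 * α)))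
        α).trace.re)
    (x : EReal)
  else ⊤

/-- The key unitary `U|i,j⟩ = |N g₁₁ i - N g₁₀ j, -N g₀₁ i + N g₀₀ j⟩`,
where `N = (det G)⁻¹` in `ℤ_d`. -/
noncomputable def convU (d n : ℕ) [Fact (Nat.Prime d)] (g00 g01 g10 g11 : ZMod d) :
    Matrix (QV d n × QV d n) (QV d n × QV d n) ℂ :=
  Matrix.of fun kl ij =>
    if kl = ((fun a => (g00 * g11 - g01 * g10)⁻¹ * g11 * ij.1 a
                      - (g00 * g11 - g01 * g10)⁻¹ * g10 * ij.2 a : QV d n),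
             (fun a => -((g00 * g11 - g01 * g10)⁻¹ * g01) * ij.1 a
                      + (g00 * g11 - g01 * g10)⁻¹ * g00 * ij.2 a : QV d n))
    then 1 else 0

/-- Tensor (Kronecker) product of two `n`-qudit operators, on the doubled system. -/
def kron {d n : ℕ} (ρ σ : Mat d n) : Matrix (QV d n × QV d n) (QV d n × QV d n) ℂ :=
  Matrix.of fun ij kl => ρ ij.1 kl.1 * σ ij.2 kl.2

/-- Partial trace over the second `n`-qudit factor. -/
noncomputable def ptrB {d n : ℕ} [Fact (Nat.Prime d)]
    (M : Matrix (QV d n × QV d n) (QV d n × QV d n) ℂ) : Mat d n :=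
  Matrix.of fun i i' => ∑ j : QV d n, M (i, j) (i', j)

/-- The convolution `ρ ⊠ σ = Tr_B[U (ρ ⊗ σ) U†]` with parameter matrix
`G = [g₀₀, g₀₁; g₁₀, g₁₁]`. -/
noncomputable def conv (d n : ℕ) [Fact (Nat.Prime d)] (g00 g01 g10 g11 : ZMod d)
    (ρ σ : Mat d n) : Mat d n :=
  ptrB (convU d n g00 g01 g10 g11 * kron ρ σ * (convU d n g00 g01 g10 g11)ᴴ)

/-- The beam-splitter unitary `U_{s,t}|i,j⟩ = |s i + t j, t i - s j⟩`. -/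
noncomputable def bsU (d n : ℕ) [Fact (Nat.Prime d)] (s t : ZMod d) :
    Matrix (QV d n × QV d n) (QV d n × QV d n) ℂ :=
  Matrix.of fun kl ij =>
    if kl = ((fun a => s * ij.1 a + t * ij.2 a : QV d n),
             (fun a => t * ij.1 a - s * ij.2 a : QV d n))
    then 1 else 0

/-- The beam-splitter convolution `ρ ⊠_{s,t} σ = Tr_B[U_{s,t} (ρ ⊗ σ) U_{s,t}†]`. -/
noncomputable def bsConv (d n : ℕ) [Fact (Nat.Prime d)] (s t : ZMod d)
    (ρ σ : Mat d n) : Mat d n :=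
  ptrB (bsU d n s t * kron ρ σ * (bsU d n s t)ᴴ)

/-- Iterated self-convolution: `⊠^0 ρ = ρ` and `⊠^{N+1} ρ = (⊠^N ρ) ⊠ ρ`. -/
noncomputable def bsIter (d n : ℕ) [Fact (Nat.Prime d)] (s t : ZMod d) :
    ℕ → Mat d n → Mat d n
  | 0, ρ => ρ
  | N + 1, ρ => bsConv d n s t (bsIter d n s t N ρ) ρ

/-- `ρ` is the pure stabilizer state `|ψ⟩⟨ψ|` with stabilizer label group `S ⊆ V^n`:
`S` has order `d^n` and `ψ` is a common eigenvector of all `w(p,q)`, `(p,q) ∈ S`. -/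
noncomputable def IsPureStabilizerWithGroup (d n : ℕ) [Fact (Nat.Prime d)]
    (ρ : Mat d n) (S : AddSubgroup (QV d n × QV d n)) : Prop :=
  Nat.card S = d ^ n ∧
    ∃ ψ : QV d n → ℂ, ψ ≠ 0 ∧
      ρ = Matrix.of (fun a b => ψ a * starRingEnd ℂ (ψ b)) ∧
      ∀ pq ∈ S, ∃ c : ℂ, (weyl d n pq.1 pq.2).mulVec ψ = c • ψ

/-- `ρ` is a pure stabilizer state. -/
noncomputable def IsPureStabilizer (d n : ℕ) [Fact (Nat.Prime d)] (ρ : Mat d n) : Prop :=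
  ∃ S : AddSubgroup (QV d n × QV d n), IsPureStabilizerWithGroup d n ρ S

/-- `ρ` is a stabilizer state: a convex combination of pure stabilizer states. -/
noncomputable def IsStabilizerState (d n : ℕ) [Fact (Nat.Prime d)] (ρ : Mat d n) : Prop :=
  ∃ (m : ℕ) (p : Fin m → ℝ) (τ : Fin m → Mat d n),
    (∀ i, 0 ≤ p i) ∧ ∑ i, p i = 1 ∧ (∀ i, IsPureStabilizer d n (τ i)) ∧
    ρ = ∑ i, (p i : ℂ) • τ i

/-- `U` is a Clifford unitary: a unitary mapping each Weyl operator, under conjugation,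
to a complex phase times a Weyl operator. -/
noncomputable def IsClifford (d n : ℕ) [Fact (Nat.Prime d)] (U : Mat d n) : Prop :=
  U ∈ Matrix.unitaryGroup (QV d n) ℂ ∧
    ∀ pq : QV d n × QV d n, ∃ (c : ℂ) (pq' : QV d n × QV d n),
      ‖c‖ = 1 ∧ U * weyl d n pq.1 pq.2 * Uᴴ = c • weyl d n pq'.1 pq'.2

/-- The divergence-based quantum Fisher information `J(ρ; H) = Tr[ρ [H,[H, log ρ]]]`. -/
noncomputable def fisherJ {d n : ℕ} [Fact (Nat.Prime d)] (ρ H : Mat d n) : ℝ :=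
  (ρ * (H * (H * matLog ρ - matLog ρ * H) - (H * matLog ρ - matLog ρ * H) * H)).trace.re

/-- Embed a single-qudit operator at site `k` of an `n`-qudit system
(tensored with the identity elsewhere). -/
noncomputable def embedAt (d n : ℕ) (k : Fin n) (M : Matrix (ZMod d) (ZMod d) ℂ) :
    Mat d n :=
  Matrix.of fun v w => if ∀ i, i ≠ k → v i = w i then M (v k) (w k) else 0

/-- The rank-one projection `H_j^Z = |j⟩⟨j|` onto the eigenvector of `Z`
with eigenvalue `ξ^j`. -/
noncomputable def projZ (d : ℕ) (j : ZMod d) : Matrix (ZMod d) (ZMod d) ℂ :=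
  Matrix.of fun a b => if a = j ∧ b = j then 1 else 0

/-- The rank-one projection `H_j^X` onto the eigenvector of `X` with eigenvalue `ξ^j`;
its entries are `(H_j^X)_{a b} = d⁻¹ ξ^{j(b-a)}`. -/
noncomputable def projX (d : ℕ) (j : ZMod d) : Matrix (ZMod d) (ZMod d) ℂ :=
  Matrix.of fun a b => (d : ℂ)⁻¹ * ch d (j * (b - a))

/-- Total Fisher information
`J(ρ) = ∑_{k=1}^n ∑_{j ∈ ℤ_d} J(ρ; H_j^{X_k}) + J(ρ; H_j^{Z_k})`. -/
noncomputable def fisherTotal (d n : ℕ) [Fact (Nat.Prime d)] (ρ : Mat d n) : ℝ :=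
  ∑ k : Fin n, ∑ j : ZMod d,
    (fisherJ ρ (embedAt d n k (projX d j)) + fisherJ ρ (embedAt d n k (projZ d j)))

/-- Holevo capacity of a channel `E`:
`χ(E) = sup H(∑ p_i E(ρ_i)) - ∑ p_i H(E(ρ_i))` over finite ensembles of states. -/
noncomputable def holevoCap (d n : ℕ) [Fact (Nat.Prime d)] (E : Mat d n → Mat d n) : ℝ :=
  ⨆ m : ℕ, ⨆ p : Fin m → ℝ, ⨆ ρs : Fin m → Mat d n,
    ⨆ _ : (∀ i, 0 ≤ p i) ∧ ∑ i, p i = 1 ∧ ∀ i, IsState d n (ρs i),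
      (vnEnt (∑ i, (p i : ℂ) • E (ρs i)) - ∑ i, p i * vnEnt (E (ρs i)))

/-- Hilbert–Schmidt norm `‖A‖₂ = (Tr[A†A])^{1/2}`. -/
noncomputable def hsNorm {d n : ℕ} [Fact (Nat.Prime d)] (A : Mat d n) : ℝ :=
  Real.sqrt ((Aᴴ * A).trace.re)

/-- Trace norm `‖A‖₁ = Tr[(A†A)^{1/2}]`. -/
noncomputable def trNorm {d n : ℕ} [Fact (Nat.Prime d)] (A : Mat d n) : ℝ :=
  (matRpow (Aᴴ * A) (2⁻¹ : ℝ)).trace.re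

/-- Tensor product of an `n₁`-qudit operator with an `n₂`-qudit operator,
as an `(n₁+n₂)`-qudit operator. -/
def tensorMat (d n₁ n₂ : ℕ) (ρ₁ : Mat d n₁) (ρ₂ : Mat d n₂) : Mat d (n₁ + n₂) :=
  Matrix.of fun v w =>
    ρ₁ (fun i => v (Fin.castAdd n₂ i)) (fun i => w (Fin.castAdd n₂ i)) *
    ρ₂ (fun j => v (Fin.natAdd n₁ j)) (fun j => w (Fin.natAdd n₁ j))

/-! ### Qubit (`d = 2`) specific definitions -/

/-- The `n`-qubit Weyl (Pauli) operator `w(p,q) = ⊗_i i^{-p_i q_i} Z^{p_i} X^{q_i}`. -/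
noncomputable def weyl2 (n : ℕ) (p q : Fin n → ZMod 2) :
    Matrix (Fin n → ZMod 2) (Fin n → ZMod 2) ℂ :=
  Matrix.of fun k' k =>
    if k' = k + q then
      ∏ i, ((-Complex.I) ^ ((p i).val * (q i).val) *
        (-1 : ℂ) ^ ((p i * (k i + q i)).val))
    else 0

/-- The `n`-qubit characteristic function `Ξ_ρ(p,q) = Tr[ρ w(p,q)†]`. -/
noncomputable def xi2 (n : ℕ) (ρ : Matrix (Fin n → ZMod 2) (Fin n → ZMod 2) ℂ)
    (pq : (Fin n → ZMod 2) × (Fin n → ZMod 2)) : ℂ :=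
  (ρ * (weyl2 n pq.1 pq.2)ᴴ).trace

/-- The logarithmic magic gap
`LMG(ρ) = -log₂ max{|Ξ_ρ(p,q)| : Ξ_ρ(p,q) ≠ 0, |Ξ_ρ(p,q)| ≠ 1}` (`0` if the set is
empty). -/
noncomputable def lmg (n : ℕ) (ρ : Matrix (Fin n → ZMod 2) (Fin n → ZMod 2) ℂ) : ℝ :=
  let s : Finset ℝ :=
    (Finset.univ.filter fun pq : (Fin n → ZMod 2) × (Fin n → ZMod 2) =>
      xi2 n ρ pq ≠ 0 ∧ ‖xi2 n ρ pq‖ ≠ 1).image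
      fun pq => ‖xi2 n ρ pq‖
  if h : s.Nonempty then -Real.logb 2 (s.max' h) else 0

/-- `U` is an `n`-qubit Clifford unitary. -/
noncomputable def IsClifford2 (n : ℕ) (U : Matrix (Fin n → ZMod 2) (Fin n → ZMod 2) ℂ) :
    Prop :=
  U ∈ Matrix.unitaryGroup (Fin n → ZMod 2) ℂ ∧
    ∀ pq : (Fin n → ZMod 2) × (Fin n → ZMod 2),
      ∃ (c : ℂ) (pq' : (Fin n → ZMod 2) × (Fin n → ZMod 2)),
        ‖c‖ = 1 ∧ U * weyl2 n pq.1 pq.2 * Uᴴ = c • weyl2 n pq'.1 pq'.2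

/-- The T gate `diag(1, e^{iπ/4})` acting on qubit `k` of an `n`-qubit system. -/
noncomputable def tGateAt (n : ℕ) (k : Fin n) :
    Matrix (Fin n → ZMod 2) (Fin n → ZMod 2) ℂ :=
  embedAt 2 n k (Matrix.of fun a b =>
    if a = b then (if a = 0 then 1 else Complex.exp (Real.pi * Complex.I / 4)) else 0)

/-- An `n`-qubit state: positive semidefinite with trace one. -/
def IsState2 (n : ℕ) (ρ : Matrix (Fin n → ZMod 2) (Fin n → ZMod 2) ℂ) : Prop :=
  ρ.PosSemidef ∧ ρ.trace = 1

end PaperQI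

namespace PaperQI

/-!
**Upper bound.** For a fixed state `ρ` the map `σ ↦ ρ ⊠ σ` is positive, trace preserving and unital,
so the spectrum of `ρ ⊠ σ` is the image of the spectrum of `σ` under a doubly stochastic matrix, and
`H(σ) ≤ H(ρ ⊠ σ)` by concavity of `-x log x`. The average output has entropy at most `n log d`.

**Lower bound.** The set `S = {u | |Ξ_σ(u)| = 1}` is an isotropic group on which `Ξ_σ` is a
character, because `σ` is a common eigenvector of the `w(u)` with `u ∈ S`. Hence `M(σ)` is the
stabilizer state of the pair `(S, Ξ_σ)`, of entropy `n log d - log |S|`. The convolution acts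
diagonally on Weyl operators: there are invertible diagonal rescalings `φ`, `ψ` of phase space with
`w(φ v) ⊠ σ = Ξ_σ(ψ v) w(v)`. So it maps the stabilizer states with labels `φ ψ⁻¹ S` bijectively to
those with labels `ψ⁻¹ S`, twisting their characters by `Ξ_σ ∘ ψ`. The latter average to the
maximally mixed state, and each of them has the entropy of `M(σ)`.

**Equality.** The generators of an MSPS `σ` of rank parameter `r` lie in `S`, so `|S| ≥ d ^ r` and
`H(M(σ)) ≤ (n - r) log d = H(σ)`.
-/

section Spectral

variable {m 𝕜 : Type*} [Fintype m] [DecidableEq m] [RCLike 𝕜] {A B : Matrix m m 𝕜}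

/-- The rank-one projection onto the `i`-th vector of the eigenbasis of a Hermitian matrix. -/
noncomputable def eigenProj (hA : A.IsHermitian) (i : m) : Matrix m m 𝕜 :=
  vecMulVec (hA.eigenvectorBasis i) (star ⇑(hA.eigenvectorBasis i))

lemma posSemidef_eigenProj (hA : A.IsHermitian) (i : m) : (eigenProj hA i).PosSemidef :=
  posSemidef_vecMulVec_self_star _

lemma trace_eigenProj (hA : A.IsHermitian) (i : m) : (eigenProj hA i).trace = 1 := by
  rw [eigenProj, trace_vecMulVec, ← EuclideanSpace.inner_eq_star_dotProduct,
    inner_self_eq_norm_sq_to_K, hA.eigenvectorBasis.norm_eq_one]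
  simp

lemma trace_eigenProj_mul (hA : A.IsHermitian) (i : m) (M : Matrix m m 𝕜) :
    (eigenProj hA i * M).trace =
      star ⇑(hA.eigenvectorBasis i) ⬝ᵥ M *ᵥ hA.eigenvectorBasis i := by
  rw [trace_mul_comm, eigenProj, mul_vecMulVec, trace_vecMulVec, dotProduct_comm]

lemma sum_eigenProj (hA : A.IsHermitian) : ∑ i, eigenProj hA i = 1 := by
  rw [← Unitary.coe_mul_star_self hA.eigenvectorUnitary]
  ext a b
  simp [eigenProj, Matrix.sum_apply, mul_apply, vecMulVec_apply]

lemma mul_eigenProj (hA : A.IsHermitian) (i : m) :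
    A * eigenProj hA i = (hA.eigenvalues i : 𝕜) • eigenProj hA i := by
  rw [eigenProj, mul_vecMulVec, hA.mulVec_eigenvectorBasis, ← smul_vecMulVec]
  simp only [RCLike.real_smul_eq_coe_smul (K := 𝕜)]

lemma sum_eigenvalues_smul_eigenProj (hA : A.IsHermitian) :
    ∑ i, (hA.eigenvalues i : 𝕜) • eigenProj hA i = A := by
  simp_rw [← mul_eigenProj, ← Finset.mul_sum, sum_eigenProj, mul_one]

lemma trace_mul_eigenProj_self (hA : A.IsHermitian) (i : m) :
    (A * eigenProj hA i).trace = hA.eigenvalues i := by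
  rw [mul_eigenProj, trace_smul, trace_eigenProj, smul_eq_mul, mul_one]

lemma eigenvalues_mul_self_of_mul_self_eq_smul (hA : A.IsHermitian) {c : ℝ}
    (hsq : A * A = (c : 𝕜) • A) (i : m) :
    hA.eigenvalues i * hA.eigenvalues i = c * hA.eigenvalues i := by
  have h : (A * A * eigenProj hA i).trace = c * hA.eigenvalues i := by
    rw [hsq, smul_mul_assoc, trace_smul, trace_mul_eigenProj_self, smul_eq_mul]
  rw [mul_assoc, mul_eigenProj, mul_smul_comm, trace_smul, trace_mul_eigenProj_self,
    smul_eq_mul] at h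
  exact_mod_cast h

omit [DecidableEq m] in
lemma posSemidef_of_mul_self_eq_smul (hA : A.IsHermitian) {c : ℝ} (hc : 0 < c)
    (hsq : A * A = (c : 𝕜) • A) : A.PosSemidef := by
  have hAA : A = (c⁻¹ : 𝕜) • (Aᴴ * A) := by
    rw [hA.eq, hsq, smul_smul, inv_mul_cancel₀ (RCLike.ofReal_ne_zero.2 hc.ne'), one_smul]
  rw [hAA]
  refine (posSemidef_conjTranspose_mul_self A).smul ?_
  exact_mod_cast (RCLike.ofReal_nonneg (K := 𝕜)).2 (inv_nonneg.2 hc.le)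

lemma sum_eigenvalues_eq_one (hA : A.IsHermitian) (htr : A.trace = 1) :
    ∑ i, hA.eigenvalues i = 1 := by
  rw [hA.trace_eq_sum_eigenvalues] at htr
  exact_mod_cast htr

lemma sum_map_le_sum_map_mulVec {D : Matrix m m ℝ} (hD : D ∈ doublyStochastic ℝ m)
    {s : Set ℝ} {f : ℝ → ℝ} (hf : ConcaveOn ℝ s f) {x : m → ℝ} (hx : ∀ j, x j ∈ s) :
    ∑ j, f (x j) ≤ ∑ k, f ((D *ᵥ x) k) := by
  obtain ⟨hnonneg, hrow, hcol⟩ := mem_doublyStochastic_iff_sum.1 hD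
  calc ∑ j, f (x j) = ∑ j, ∑ k, D k j * f (x j) := by simp_rw [← Finset.sum_mul, hcol, one_mul]
    _ = ∑ k, ∑ j, D k j * f (x j) := Finset.sum_comm
    _ ≤ ∑ k, f ((D *ᵥ x) k) := Finset.sum_le_sum fun k _ => by
      simpa only [mulVec, dotProduct, smul_eq_mul] using
        hf.le_map_sum (fun j _ => hnonneg k j) (hrow k) fun j _ => hx j

/-- A positive, trace-preserving and unital linear map on matrices: the quantum analogue of a
doubly stochastic matrix. Complete positivity is not required. -/
structure IsBistochastic (Φ : Matrix m m 𝕜 →ₗ[𝕜] Matrix m m 𝕜) : Prop where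
  map_posSemidef : ∀ ⦃M⦄, M.PosSemidef → (Φ M).PosSemidef
  trace_map : ∀ M, (Φ M).trace = M.trace
  map_one : Φ 1 = 1

/-- The transition probabilities `tr (F k * Φ (E j))` from the eigenprojections `E j` of `A` to
the eigenprojections `F k` of `B`. -/
noncomputable def transitionMatrix (hA : A.IsHermitian) (hB : B.IsHermitian)
    (Φ : Matrix m m 𝕜 →ₗ[𝕜] Matrix m m 𝕜) : Matrix m m ℝ :=
  of fun k j => RCLike.re (eigenProj hB k * Φ (eigenProj hA j)).trace

lemma IsBistochastic.transitionMatrix_mem_doublyStochastic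
    {Φ : Matrix m m 𝕜 →ₗ[𝕜] Matrix m m 𝕜} (hΦ : IsBistochastic Φ)
    (hA : A.IsHermitian) (hB : B.IsHermitian) :
    transitionMatrix hA hB Φ ∈ doublyStochastic ℝ m := by
  refine mem_doublyStochastic_iff_sum.2 ⟨fun k j => ?_, fun k => ?_, fun j => ?_⟩ <;>
    simp only [transitionMatrix, of_apply, ← map_sum, ← trace_sum, ← Finset.mul_sum,
      ← Finset.sum_mul, sum_eigenProj, hΦ.map_one, mul_one, one_mul, hΦ.trace_map,
      trace_eigenProj, RCLike.one_re]
  rw [trace_eigenProj_mul]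
  exact (RCLike.nonneg_iff.1 <| (hΦ.map_posSemidef <| posSemidef_eigenProj hA j
    ).dotProduct_mulVec_nonneg _).1

lemma transitionMatrix_mulVec_eigenvalues {Φ : Matrix m m 𝕜 →ₗ[𝕜] Matrix m m 𝕜}
    (hA : A.IsHermitian) (hΦA : (Φ A).IsHermitian) :
    transitionMatrix hA hΦA Φ *ᵥ hA.eigenvalues = hΦA.eigenvalues := by
  ext k
  have hdecomp : Φ A = ∑ j, (hA.eigenvalues j : 𝕜) • Φ (eigenProj hA j) := by
    simp only [← map_smul, ← map_sum, sum_eigenvalues_smul_eigenProj]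
  calc (transitionMatrix hA hΦA Φ *ᵥ hA.eigenvalues) k
      = RCLike.re (eigenProj hΦA k *
          ∑ j, (hA.eigenvalues j : 𝕜) • Φ (eigenProj hA j)).trace := by
        simp only [mulVec, dotProduct, transitionMatrix, of_apply, Finset.mul_sum, mul_smul_comm,
          trace_sum, trace_smul, map_sum, smul_eq_mul, RCLike.re_ofReal_mul, mul_comm]
    _ = hΦA.eigenvalues k := by
        rw [← hdecomp, trace_mul_comm, trace_mul_eigenProj_self, RCLike.ofReal_re]

lemma IsBistochastic.sum_map_eigenvalues_le {Φ : Matrix m m 𝕜 →ₗ[𝕜] Matrix m m 𝕜}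
    (hΦ : IsBistochastic Φ) {s : Set ℝ} {f : ℝ → ℝ} (hf : ConcaveOn ℝ s f)
    (hA : A.IsHermitian) (hΦA : (Φ A).IsHermitian) (hs : ∀ i, hA.eigenvalues i ∈ s) :
    ∑ i, f (hA.eigenvalues i) ≤ ∑ i, f (hΦA.eigenvalues i) := by
  rw [← transitionMatrix_mulVec_eigenvalues hA hΦA]
  exact sum_map_le_sum_map_mulVec (hΦ.transitionMatrix_mem_doublyStochastic hA hΦA) hf hs

omit [DecidableEq m] in
lemma mul_eq_zero_of_trace_mul_mul_conjTranspose_eq_zero {M : Matrix m m 𝕜}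
    (hA : A.PosSemidef) (h : (M * A * Mᴴ).trace = 0) : M * A = 0 := by
  classical
  open scoped MatrixOrder in
  obtain ⟨R, rfl⟩ := CStarAlgebra.nonneg_iff_eq_star_mul_self.1 hA.nonneg
  have hMR : (M * Rᴴ * (M * Rᴴ)ᴴ).trace = 0 := by
    simpa only [conjTranspose_mul, conjTranspose_conjTranspose, star_eq_conjTranspose,
      mul_assoc] using h
  rw [star_eq_conjTranspose, ← mul_assoc, trace_mul_conjTranspose_self_eq_zero_iff.1 hMR,
    zero_mul]

lemma mul_eq_trace_smul_of_norm_trace_eq_one {σ W : Matrix m m 𝕜} (hσ : σ.PosSemidef)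
    (htr : σ.trace = 1) (hW : Wᴴ * W = 1) (h : ‖(σ * W).trace‖ = 1) :
    W * σ = (σ * W).trace • σ := by
  set c := (σ * W).trace with hc
  have hcc : star c * c = 1 := by simpa [h] using RCLike.conj_mul c
  have hWσ : (W * σ).trace = c := trace_mul_comm W σ
  have hstar : (σ * Wᴴ).trace = star c := by
    rw [hc, ← trace_conjTranspose, conjTranspose_mul, hσ.1, trace_mul_comm]
  have hunit : (W * σ * Wᴴ).trace = 1 := by
    rw [trace_mul_comm, ← mul_assoc, hW, one_mul, htr]
  have hzero : ((W - c • 1) * σ * (W - c • 1)ᴴ).trace = 0 := by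
    simp only [conjTranspose_sub, conjTranspose_smul, conjTranspose_one, sub_mul, mul_sub,
      smul_mul_assoc, mul_smul_comm, one_mul, mul_one, smul_sub, trace_sub, trace_smul, smul_eq_mul,
      hunit, hWσ, hstar, htr]
    linear_combination -hcc
  have h0 := mul_eq_zero_of_trace_mul_mul_conjTranspose_eq_zero hσ hzero
  rwa [sub_mul, smul_mul_assoc, one_mul, sub_eq_zero] at h0

end Spectral

section Entropy

variable {d n : ℕ} [Fact (Nat.Prime d)] {ρ : Mat d n}

lemma vnEnt_eq_sum_negMulLog (hρ : ρ.IsHermitian) :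
    vnEnt ρ = ∑ i, Real.negMulLog (hρ.eigenvalues i) := by
  simp [vnEnt, hρ, Real.negMulLog]

lemma IsBistochastic.vnEnt_le {Φ : Mat d n →ₗ[ℂ] Mat d n} (hΦ : IsBistochastic Φ)
    (hρ : ρ.PosSemidef) : vnEnt ρ ≤ vnEnt (Φ ρ) := by
  have hΦρ := hΦ.map_posSemidef hρ
  rw [vnEnt_eq_sum_negMulLog hρ.1, vnEnt_eq_sum_negMulLog hΦρ.1]
  exact hΦ.sum_map_eigenvalues_le Real.concaveOn_negMulLog hρ.1 hΦρ.1 hρ.eigenvalues_nonneg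

lemma IsBistochastic.isState {Φ : Mat d n →ₗ[ℂ] Mat d n} (hΦ : IsBistochastic Φ)
    (hρ : IsState d n ρ) : IsState d n (Φ ρ) :=
  ⟨hΦ.map_posSemidef hρ.1, (hΦ.trace_map ρ).trans hρ.2⟩

lemma vnEnt_eq_neg_log_of_mul_self_eq_smul (hρ : ρ.IsHermitian) (htr : ρ.trace = 1) {c : ℝ}
    (hsq : ρ * ρ = (c : ℂ) • ρ) : vnEnt ρ = -Real.log c := by
  have hterm (i : QV d n) : hρ.eigenvalues i * Real.log (hρ.eigenvalues i) =
      hρ.eigenvalues i * Real.log c := by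
    obtain h | h := mul_eq_mul_right_iff.1 (eigenvalues_mul_self_of_mul_self_eq_smul hρ hsq i) <;>
      simp [h]
  rw [vnEnt, dif_pos hρ, Finset.sum_congr rfl fun i _ => hterm i, ← Finset.sum_mul,
    sum_eigenvalues_eq_one hρ htr, one_mul]

lemma card_qudit_basis : Fintype.card (QV d n) = d ^ n := by
  simp [ZMod.card]

lemma dim_pos (d n : ℕ) [Fact (Nat.Prime d)] : (0 : ℝ) < (d : ℝ) ^ n :=
  pow_pos (Nat.cast_pos.2 (Fact.out : d.Prime).pos) n

lemma natCast_dim_ne_zero (d n : ℕ) [Fact (Nat.Prime d)] : (d : ℂ) ^ n ≠ 0 :=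
  pow_ne_zero n (Nat.cast_ne_zero.2 (Fact.out : d.Prime).ne_zero)

/-- The maximally mixed state `d⁻ⁿ 1`. -/
noncomputable def maxMixed (d n : ℕ) : Mat d n := ((d : ℂ) ^ n)⁻¹ • 1

lemma isState_maxMixed : IsState d n (maxMixed d n) := by
  refine ⟨PosSemidef.one.smul ?_, ?_⟩
  · exact inv_nonneg.2 (pow_nonneg (Nat.cast_nonneg d) n)
  · rw [maxMixed, trace_smul, trace_one, card_qudit_basis, Nat.cast_pow, smul_eq_mul,
      inv_mul_cancel₀ (natCast_dim_ne_zero d n)]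

lemma vnEnt_maxMixed : vnEnt (maxMixed d n) = n * Real.log d := by
  rw [vnEnt_eq_neg_log_of_mul_self_eq_smul isState_maxMixed.1.1 isState_maxMixed.2
    (c := ((d : ℝ) ^ n)⁻¹) (by simp [maxMixed]), Real.log_inv, Real.log_pow, neg_neg]

lemma isBistochastic_trace_smulRight_maxMixed :
    IsBistochastic ((traceLinearMap (QV d n) ℂ ℂ).smulRight (maxMixed d n)) where
  map_posSemidef _ hM := isState_maxMixed.1.smul hM.trace_nonneg
  trace_map M := by simp [isState_maxMixed.2]
  map_one := by
    simp [maxMixed, ZMod.card, smul_smul, natCast_dim_ne_zero d n]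

lemma IsState.vnEnt_le (hρ : IsState d n ρ) : vnEnt ρ ≤ n * Real.log d := by
  have h := isBistochastic_trace_smulRight_maxMixed.vnEnt_le hρ.1
  rwa [LinearMap.smulRight_apply, traceLinearMap_apply, hρ.2, one_smul, vnEnt_maxMixed] at h

lemma isState_sum_smul {ι : Type*} [Fintype ι] {p : ι → ℝ} {ρs : ι → Mat d n}
    (hp : ∀ i, 0 ≤ p i) (hsum : ∑ i, p i = 1) (hρs : ∀ i, IsState d n (ρs i)) :
    IsState d n (∑ i, (p i : ℂ) • ρs i) := by
  refine ⟨posSemidef_sum _ fun i _ => (hρs i).1.smul (by exact_mod_cast hp i), ?_⟩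
  simp only [trace_sum, trace_smul, (hρs _).2, smul_eq_mul, mul_one]
  exact_mod_cast hsum

end Entropy

section Holevo

variable {d n : ℕ} [Fact (Nat.Prime d)] {E : Mat d n → Mat d n} {ι : Type*} [Fintype ι]
  {p : ι → ℝ} {ρs : ι → Mat d n}

/-- A finite ensemble of `n`-qudit states: a state `ρs i` for each outcome `i` of the probability
distribution `p`. -/
structure IsEnsemble (p : ι → ℝ) (ρs : ι → Mat d n) : Prop where
  nonneg : ∀ i, 0 ≤ p i
  sum_eq_one : ∑ i, p i = 1
  isState : ∀ i, IsState d n (ρs i)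

/-- The Holevo quantity of the ensemble `(p, ρs)` sent through the map `E`. -/
noncomputable def holevoQuantity (E : Mat d n → Mat d n) (p : ι → ℝ) (ρs : ι → Mat d n) : ℝ :=
  vnEnt (∑ i, (p i : ℂ) • E (ρs i)) - ∑ i, p i * vnEnt (E (ρs i))

/-- The values of the Holevo quantity of `E` on finite ensembles, indexed as in `holevoCap`. -/
def holevoValues (E : Mat d n → Mat d n) : Set ℝ :=
  {x | ∃ (m : ℕ) (p : Fin m → ℝ) (ρs : Fin m → Mat d n),
    IsEnsemble p ρs ∧ holevoQuantity E p ρs = x}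

lemma IsEnsemble.holevoQuantity_mem_holevoValues (h : IsEnsemble p ρs) :
    holevoQuantity E p ρs ∈ holevoValues E := by
  let e := (Fintype.equivFin ι).symm
  refine ⟨_, p ∘ e, ρs ∘ e, ⟨fun i => h.nonneg (e i), (e.sum_comp p).trans h.sum_eq_one,
    fun i => h.isState (e i)⟩, ?_⟩
  simp only [holevoQuantity, Function.comp_apply, e.sum_comp fun i => (p i : ℂ) • E (ρs i),
    e.sum_comp fun i => p i * vnEnt (E (ρs i))]

lemma zero_mem_holevoValues : 0 ∈ holevoValues E :=
  ⟨1, fun _ => 1, fun _ => maxMixed d n, ⟨fun _ => zero_le_one, by simp, fun _ => isState_maxMixed⟩,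
    by simp [holevoQuantity]⟩

lemma isLUB_holevoCap (hE : BddAbove (holevoValues E)) :
    IsLUB (holevoValues E) (holevoCap d n E) := by
  have hle {B : ℝ} (hB : B ∈ upperBounds (holevoValues E)) (m : ℕ) (p : Fin m → ℝ)
      (ρs : Fin m → Mat d n)
      (h : (∀ i, 0 ≤ p i) ∧ ∑ i, p i = 1 ∧ ∀ i, IsState d n (ρs i)) :
      holevoQuantity E p ρs ≤ B := hB ⟨m, p, ρs, ⟨h.1, h.2.1, h.2.2⟩, rfl⟩
  constructor
  · obtain ⟨B, hB⟩ := hE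
    have hB0 : 0 ≤ B := hB zero_mem_holevoValues
    have hens m p ρs := Real.iSup_le (hle hB m p ρs) hB0
    have hstates m p := Real.iSup_le (hens m p) hB0
    have hweights m := Real.iSup_le (hstates m) hB0
    rintro _ ⟨m, p, ρs, h, rfl⟩
    exact le_ciSup_of_le ⟨B, Set.forall_mem_range.2 hweights⟩ m <|
      le_ciSup_of_le ⟨B, Set.forall_mem_range.2 (hstates m)⟩ p <|
      le_ciSup_of_le ⟨B, Set.forall_mem_range.2 (hens m p)⟩ ρs <|
      le_ciSup_of_le ⟨B, Set.forall_mem_range.2 (hle hB m p ρs)⟩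
        ⟨h.nonneg, h.sum_eq_one, h.isState⟩ le_rfl
  · intro B hB
    have hB0 : 0 ≤ B := hB zero_mem_holevoValues
    exact Real.iSup_le (fun m => Real.iSup_le (fun p => Real.iSup_le (fun ρs =>
      Real.iSup_le (hle hB m p ρs) hB0) hB0) hB0) hB0

lemma IsEnsemble.holevoQuantity_le (h : IsEnsemble p ρs)
    (hE : ∀ ρ, IsState d n ρ → IsState d n (E ρ)) {b : ℝ}
    (hb : ∀ ρ, IsState d n ρ → b ≤ vnEnt (E ρ)) :
    holevoQuantity E p ρs ≤ n * Real.log d - b := by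
  have hmean : b ≤ ∑ i, p i * vnEnt (E (ρs i)) :=
    calc b = ∑ i, p i * b := by rw [← Finset.sum_mul, h.sum_eq_one, one_mul]
      _ ≤ _ := Finset.sum_le_sum fun i _ =>
        mul_le_mul_of_nonneg_left (hb _ (h.isState i)) (h.nonneg i)
  have hout : IsState d n (∑ i, (p i : ℂ) • E (ρs i)) :=
    isState_sum_smul h.nonneg h.sum_eq_one fun i => hE _ (h.isState i)
  exact sub_le_sub hout.vnEnt_le hmean

lemma mem_upperBounds_holevoValues (hE : ∀ ρ, IsState d n ρ → IsState d n (E ρ)) {b : ℝ}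
    (hb : ∀ ρ, IsState d n ρ → b ≤ vnEnt (E ρ)) :
    n * Real.log d - b ∈ upperBounds (holevoValues E) := by
  rintro _ ⟨m, p, ρs, h, rfl⟩
  exact h.holevoQuantity_le hE hb

lemma isEnsemble_uniform [Nonempty ι] (hρs : ∀ i, IsState d n (ρs i)) :
    IsEnsemble (fun _ => (Fintype.card ι : ℝ)⁻¹) ρs where
  nonneg _ := inv_nonneg.2 (Nat.cast_nonneg _)
  sum_eq_one := by simp
  isState := hρs

lemma sub_mem_holevoValues [Nonempty ι] (hρs : ∀ i, IsState d n (ρs i)) {b : ℝ}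
    (hent : ∀ i, vnEnt (E (ρs i)) = b)
    (hsum : ∑ i, E (ρs i) = (Fintype.card ι : ℂ) • maxMixed d n) :
    n * Real.log d - b ∈ holevoValues E := by
  have hcard : (Fintype.card ι : ℂ) ≠ 0 := Nat.cast_ne_zero.2 Fintype.card_ne_zero
  have hens := isEnsemble_uniform hρs
  have hout : ∑ i, (((Fintype.card ι : ℝ)⁻¹ : ℝ) : ℂ) • E (ρs i) = maxMixed d n := by
    rw [← Finset.smul_sum, hsum, smul_smul]
    push_cast
    rw [inv_mul_cancel₀ hcard, one_smul]
  convert hens.holevoQuantity_mem_holevoValues (E := E) using 1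
  simp only [holevoQuantity, hout, vnEnt_maxMixed, hent, ← Finset.sum_mul, hens.sum_eq_one, one_mul]

end Holevo

section Weyl

variable {d n : ℕ} [Fact (Nat.Prime d)]

/-- The labels of the Weyl operators: the symplectic space `V^n = ℤ_d^n × ℤ_d^n`. -/
abbrev PhaseSpace (d n : ℕ) := QV d n × QV d n

/-- The Weyl operator with label `u = (p, q)`. -/
noncomputable def weylOp (u : PhaseSpace d n) : Mat d n := weyl d n u.1 u.2

/-- The symplectic form, which controls the commutation of Weyl operators. -/
def sympForm (u v : PhaseSpace d n) : ZMod d := u.1 ⬝ᵥ v.2 - v.1 ⬝ᵥ u.2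

lemma ch_eq_stdAddChar (z : ZMod d) : ch d z = ZMod.stdAddChar z := by
  rw [ZMod.stdAddChar_apply, ZMod.toCircle_apply, ch]

lemma weylOp_apply (u : PhaseSpace d n) (k' k : QV d n) : weylOp u k' k =
    if k' = k + u.2 then ZMod.stdAddChar (u.1 ⬝ᵥ k + (2 : ZMod d)⁻¹ * (u.1 ⬝ᵥ u.2)) else 0 := by
  rw [← ch_eq_stdAddChar]
  rfl

lemma inv_two_mul_two (hd : Odd d) : (2 : ZMod d)⁻¹ * 2 = 1 := by
  refine inv_mul_cancel₀ fun h => ?_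
  have hdvd : d ∣ 2 := (ZMod.natCast_eq_zero_iff 2 d).1 (by exact_mod_cast h)
  rw [(Nat.prime_dvd_prime_iff_eq Fact.out Nat.prime_two).1 hdvd] at hd
  exact absurd hd (by decide)

lemma weylOp_mul (hd : Odd d) (u v : PhaseSpace d n) :
    weylOp u * weylOp v = ZMod.stdAddChar ((2 : ZMod d)⁻¹ * sympForm u v) • weylOp (u + v) := by
  ext k' k
  rw [mul_apply, Matrix.smul_apply, Finset.sum_eq_single (k + v.2)]
  · have hiff : k' = k + v.2 + u.2 ↔ k' = k + (u + v).2 := by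
      rw [Prod.snd_add, add_assoc, add_comm v.2]
    simp only [weylOp_apply, if_true, hiff, smul_eq_mul, mul_ite, ite_mul, mul_zero, zero_mul,
      ← AddChar.map_add_eq_mul]
    congr 2
    simp only [sympForm, Prod.fst_add, Prod.snd_add, add_dotProduct, dotProduct_add]
    linear_combination -(u.1 ⬝ᵥ v.2) * inv_two_mul_two hd
  · intro b _ hb
    rw [weylOp_apply v, if_neg hb, mul_zero]
  · simp

lemma weylOp_zero : weylOp (0 : PhaseSpace d n) = 1 := by
  ext a b
  simp [weylOp_apply, one_apply]

lemma conjTranspose_weylOp (hd : Odd d) (u : PhaseSpace d n) : (weylOp u)ᴴ = weylOp (-u) := by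
  ext a b
  have hiff : b = a + u.2 ↔ a = b + (-u).2 := by
    rw [Prod.snd_neg, ← sub_eq_add_neg, eq_sub_iff_add_eq, eq_comm]
  simp only [conjTranspose_apply, weylOp_apply, ← hiff]
  split_ifs with h
  · rw [← starRingEnd_apply, ← AddChar.map_neg_eq_conj]
    congr 1
    simp only [h, Prod.fst_neg, Prod.snd_neg, neg_dotProduct, dotProduct_neg, dotProduct_add]
    linear_combination -(u.1 ⬝ᵥ u.2) * inv_two_mul_two hd
  · exact star_zero ℂ

lemma weylOp_mul_weylOp_of_sympForm_eq_zero (hd : Odd d) {u v : PhaseSpace d n}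
    (h : sympForm u v = 0) : weylOp u * weylOp v = weylOp (u + v) := by
  rw [weylOp_mul hd, h, mul_zero, AddChar.map_zero_eq_one, one_smul]

lemma conjTranspose_weylOp_mul_self (hd : Odd d) (u : PhaseSpace d n) :
    (weylOp u)ᴴ * weylOp u = 1 := by
  rw [conjTranspose_weylOp hd, weylOp_mul_weylOp_of_sympForm_eq_zero hd, neg_add_cancel,
    weylOp_zero]
  simp [sympForm]

lemma weylOp_pow (hd : Odd d) (u : PhaseSpace d n) (k : ℕ) :
    weylOp u ^ k = weylOp (k • u) := by
  induction k with
  | zero => rw [pow_zero, zero_nsmul, weylOp_zero]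
  | succ k ih =>
    rw [pow_succ, ih, succ_nsmul, weylOp_mul_weylOp_of_sympForm_eq_zero hd]
    simp only [sympForm, Prod.smul_fst, Prod.smul_snd, smul_dotProduct, dotProduct_smul, sub_self]

lemma weylOp_pow_card (hd : Odd d) (u : PhaseSpace d n) : weylOp u ^ d = 1 := by
  have hdu : d • u = 0 := by ext <;> simp
  rw [weylOp_pow hd, hdu, weylOp_zero]

lemma sum_stdAddChar_dotProduct {p : QV d n} (hp : p ≠ 0) :
    ∑ k : QV d n, ZMod.stdAddChar (p ⬝ᵥ k) = (0 : ℂ) := by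
  let χ : AddChar (QV d n) ℂ := (ZMod.stdAddChar (N := d)).compAddMonoidHom
    (AddMonoidHom.mk' (p ⬝ᵥ ·) (dotProduct_add p))
  obtain ⟨i, hi⟩ := Function.ne_iff.1 hp
  have hχ : χ ≠ 0 := by
    refine fun h => hi (ZMod.injective_stdAddChar (N := d) ?_)
    simpa [χ] using DFunLike.congr_fun h (Pi.single i 1)
  exact AddChar.sum_eq_zero_iff_ne_zero.2 hχ

lemma trace_weylOp (u : PhaseSpace d n) :
    (weylOp u).trace = if u = 0 then (d : ℂ) ^ n else 0 := by
  simp only [trace, diag_apply, weylOp_apply, left_eq_add]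
  split_ifs with hq h h
  · simp [h, ZMod.card]
  · have hp : u.1 ≠ 0 := fun hp => h (Prod.ext hp hq)
    simpa [hq] using sum_stdAddChar_dotProduct hp
  · exact absurd (congrArg Prod.snd h) hq
  · exact Finset.sum_const_zero

/-- The linear rescaling `(p, q) ↦ (a p, b q)` of phase space. -/
def rescale (a b : ZMod d) : PhaseSpace d n →+ PhaseSpace d n :=
  AddMonoidHom.mk' (fun u => (a • u.1, b • u.2)) fun u v => by
    rw [Prod.fst_add, Prod.snd_add, smul_add, smul_add, Prod.mk_add_mk]

lemma rescale_apply (a b : ZMod d) (u : PhaseSpace d n) : rescale a b u = (a • u.1, b • u.2) := rfl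

lemma rescale_rescale_inv {a b : ZMod d} (ha : a ≠ 0) (hb : b ≠ 0) (u : PhaseSpace d n) :
    rescale a b (rescale a⁻¹ b⁻¹ u) = u := by
  simp only [rescale_apply, smul_smul, mul_inv_cancel₀ ha, mul_inv_cancel₀ hb, one_smul,
    Prod.mk.eta]

lemma rescale_injective {a b : ZMod d} (ha : a ≠ 0) (hb : b ≠ 0) :
    Function.Injective (rescale a b : PhaseSpace d n →+ PhaseSpace d n) :=
  fun _ _ h => Prod.ext (smul_right_injective _ ha (congrArg Prod.fst h))
    (smul_right_injective _ hb (congrArg Prod.snd h))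

lemma sympForm_rescale (a b : ZMod d) (u v : PhaseSpace d n) :
    sympForm (rescale a b u) (rescale a b v) = a * b * sympForm u v := by
  simp only [sympForm, rescale_apply, smul_dotProduct, dotProduct_smul, smul_eq_mul]
  ring

end Weyl

section CharacteristicFunction

variable {d n : ℕ} [Fact (Nat.Prime d)] {σ : Mat d n}

lemma xi_eq_trace (σ : Mat d n) (u : PhaseSpace d n) : xi d n σ u = (σ * weylOp (-u)).trace := rfl

lemma xi_zero (hσ : IsState d n σ) : xi d n σ 0 = 1 := by
  rw [xi_eq_trace, neg_zero, weylOp_zero, mul_one, hσ.2]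

lemma weylOp_neg_mul_eq_xi_smul (hd : Odd d) (hσ : IsState d n σ) {u : PhaseSpace d n}
    (hu : ‖xi d n σ u‖ = 1) : weylOp (-u) * σ = xi d n σ u • σ :=
  mul_eq_trace_smul_of_norm_trace_eq_one hσ.1 hσ.2 (conjTranspose_weylOp_mul_self hd _) hu

/-- Evaluate `tr (W(-u) W(-v) σ)` with the eigenvalue equations and with the Weyl relations. -/
lemma stdAddChar_mul_xi_add (hd : Odd d) (hσ : IsState d n σ) {u v : PhaseSpace d n}
    (hu : ‖xi d n σ u‖ = 1) (hv : ‖xi d n σ v‖ = 1) :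
    ZMod.stdAddChar ((2 : ZMod d)⁻¹ * sympForm u v) * xi d n σ (u + v) =
      xi d n σ u * xi d n σ v := by
  have hsymp : sympForm (-u) (-v) = sympForm u v := by simp [sympForm]
  calc _ = (weylOp (-u) * weylOp (-v) * σ).trace := by
        rw [weylOp_mul hd, hsymp, smul_mul_assoc, trace_smul, smul_eq_mul, ← neg_add,
          trace_mul_comm, xi_eq_trace]
    _ = _ := by
        rw [mul_assoc, weylOp_neg_mul_eq_xi_smul hd hσ hv, mul_smul_comm,
          weylOp_neg_mul_eq_xi_smul hd hσ hu, trace_smul, trace_smul, hσ.2, smul_eq_mul,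
          smul_eq_mul, mul_one, mul_comm]

lemma sympForm_eq_zero_of_norm_xi_eq_one (hd : Odd d) (hσ : IsState d n σ) {u v : PhaseSpace d n}
    (hu : ‖xi d n σ u‖ = 1) (hv : ‖xi d n σ v‖ = 1) : sympForm u v = 0 := by
  have huv := stdAddChar_mul_xi_add hd hσ hu hv
  have hvu := stdAddChar_mul_xi_add hd hσ hv hu
  rw [add_comm v, mul_comm (xi d n σ v), ← huv] at hvu
  have hne : xi d n σ (u + v) ≠ 0 := fun h => by
    simpa [h, hu, hv] using congrArg norm huv
  have heq := ZMod.injective_stdAddChar (mul_right_cancel₀ hne hvu)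
  have hanti : sympForm v u = -sympForm u v := (neg_sub _ _).symm
  rw [hanti] at heq
  linear_combination -heq - sympForm u v * inv_two_mul_two hd

lemma xi_add (hd : Odd d) (hσ : IsState d n σ) {u v : PhaseSpace d n}
    (hu : ‖xi d n σ u‖ = 1) (hv : ‖xi d n σ v‖ = 1) :
    xi d n σ (u + v) = xi d n σ u * xi d n σ v := by
  rw [← stdAddChar_mul_xi_add hd hσ hu hv, sympForm_eq_zero_of_norm_xi_eq_one hd hσ hu hv, mul_zero,
    AddChar.map_zero_eq_one, one_mul]

lemma xi_neg (hd : Odd d) (hσ : σ.IsHermitian) (u : PhaseSpace d n) :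
    xi d n σ (-u) = star (xi d n σ u) := by
  rw [xi_eq_trace, xi_eq_trace, ← trace_conjTranspose, conjTranspose_mul, conjTranspose_weylOp hd,
    hσ.eq, trace_mul_comm]

/-- The labels at which the characteristic function of the state `σ` has modulus one. -/
def unitSubgroup (hd : Odd d) (hσ : IsState d n σ) : AddSubgroup (PhaseSpace d n) where
  carrier := {u | ‖xi d n σ u‖ = 1}
  zero_mem' := by simp [xi_zero hσ]
  add_mem' {u v} hu hv := by
    change ‖xi d n σ (u + v)‖ = 1
    rw [xi_add hd hσ hu hv, norm_mul, hu, hv, mul_one]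
  neg_mem' {u} hu := by
    change ‖xi d n σ (-u)‖ = 1
    rw [xi_neg hd hσ.1.1, norm_star, hu]

lemma mem_unitSubgroup {hd : Odd d} {hσ : IsState d n σ} {u : PhaseSpace d n} :
    u ∈ unitSubgroup hd hσ ↔ ‖xi d n σ u‖ = 1 := Iff.rfl

lemma mem_unitSubgroup_of_weylOp_mul_eq_smul {hd : Odd d} {hσ : IsState d n σ}
    {u : PhaseSpace d n} {c : ℂ} (hc : ‖c‖ = 1) (h : weylOp u * σ = c • σ) :
    u ∈ unitSubgroup hd hσ := by
  rw [← neg_mem_iff, mem_unitSubgroup, xi_eq_trace, neg_neg, trace_mul_comm, h, trace_smul, hσ.2,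
    smul_eq_mul, mul_one, hc]

/-- The characteristic function of `σ`, which is a character of the group `unitSubgroup`. -/
noncomputable def unitChar (hd : Odd d) (hσ : IsState d n σ) :
    AddChar (unitSubgroup hd hσ) ℂ where
  toFun u := xi d n σ u
  map_zero_eq_one' := xi_zero hσ
  map_add_eq_mul' u v := xi_add hd hσ u.2 v.2

end CharacteristicFunction

section Stabilizer

variable {d n : ℕ} [Fact (Nat.Prime d)] {G : Type*} [AddCommGroup G] {f : G →+ PhaseSpace d n}

/-- A family of labels `f` is isotropic when the Weyl operators `weylOp (f g)` commute pairwise. -/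
def IsIsotropic (f : G →+ PhaseSpace d n) : Prop := ∀ g h, sympForm (f g) (f h) = 0

lemma isIsotropic_subtype_unitSubgroup (hd : Odd d) {σ : Mat d n} (hσ : IsState d n σ) :
    IsIsotropic (unitSubgroup hd hσ).subtype :=
  fun u v => sympForm_eq_zero_of_norm_xi_eq_one hd hσ u.2 v.2

variable [Fintype G]

/-- The operator `d⁻ⁿ ∑ g, χ g • weylOp (f g)`. When `f` is injective and isotropic, this is the
normalized projection onto the common eigenspace on which each `weylOp (f g)` acts as
`conj (χ g)`. The group `G` is kept apart from its image so that `f` can be changed freely. -/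
noncomputable def stabMat (f : G →+ PhaseSpace d n) (χ : AddChar G ℂ) : Mat d n :=
  ((d : ℂ) ^ n)⁻¹ • ∑ g, χ g • weylOp (f g)

lemma meanState_eq_stabMat (hd : Odd d) {σ : Mat d n} (hσ : IsState d n σ) :
    meanState d n σ = stabMat (unitSubgroup hd hσ).subtype (unitChar hd hσ) := by
  rw [meanState, stabMat, ← Finset.sum_filter]
  congr 1
  exact Finset.sum_subtype _ (fun u => by simp [mem_unitSubgroup]) _

lemma isHermitian_stabMat (hd : Odd d) (f : G →+ PhaseSpace d n) (χ : AddChar G ℂ) :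
    (stabMat f χ).IsHermitian := by
  rw [IsHermitian, stabMat, conjTranspose_smul, conjTranspose_sum]
  congr 1
  · simp
  · refine Fintype.sum_equiv (Equiv.neg G) _ _ fun g => ?_
    rw [conjTranspose_smul, conjTranspose_weylOp hd, Equiv.neg_apply, AddChar.map_neg_eq_conj,
      starRingEnd_apply, map_neg]

lemma trace_stabMat (hf : Function.Injective f) (χ : AddChar G ℂ) : (stabMat f χ).trace = 1 := by
  simp only [stabMat, trace_smul, trace_sum, trace_weylOp, map_eq_zero_iff f hf, smul_eq_mul,
    mul_ite, mul_zero, Finset.sum_ite_eq', Finset.mem_univ, if_true, AddChar.map_zero_eq_one,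
    one_mul, inv_mul_cancel₀ (natCast_dim_ne_zero d n)]

lemma IsIsotropic.smul_weylOp_mul_sum (hf : IsIsotropic f) (hd : Odd d) (χ : AddChar G ℂ)
    (g : G) : χ g • weylOp (f g) * ∑ h, χ h • weylOp (f h) = ∑ h, χ h • weylOp (f h) := by
  rw [Finset.mul_sum]
  refine Fintype.sum_equiv (Equiv.addLeft g) _ _ fun h => ?_
  rw [smul_mul_smul_comm, weylOp_mul_weylOp_of_sympForm_eq_zero hd (hf g h),
    Equiv.coe_addLeft, AddChar.map_add_eq_mul, map_add]

lemma IsIsotropic.stabMat_mul_self (hf : IsIsotropic f) (hd : Odd d) (χ : AddChar G ℂ) :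
    stabMat f χ * stabMat f χ = ((Nat.card G / d ^ n : ℝ) : ℂ) • stabMat f χ := by
  simp only [stabMat, smul_mul_smul_comm, Finset.sum_mul, hf.smul_weylOp_mul_sum hd]
  simp only [Finset.sum_const, Finset.card_univ, ← Nat.card_eq_fintype_card, smul_smul,
    ← Nat.cast_smul_eq_nsmul ℂ]
  congr 1
  push_cast
  ring

lemma IsIsotropic.isState_stabMat (hf : IsIsotropic f) (hinj : Function.Injective f) (hd : Odd d)
    (χ : AddChar G ℂ) : IsState d n (stabMat f χ) :=
  ⟨posSemidef_of_mul_self_eq_smul (isHermitian_stabMat hd f χ)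
    (div_pos (Nat.cast_pos.2 Nat.card_pos) (dim_pos d n)) (hf.stabMat_mul_self hd χ),
    trace_stabMat hinj χ⟩

lemma IsIsotropic.vnEnt_stabMat (hf : IsIsotropic f) (hinj : Function.Injective f) (hd : Odd d)
    (χ : AddChar G ℂ) : vnEnt (stabMat f χ) = n * Real.log d - Real.log (Nat.card G) := by
  rw [vnEnt_eq_neg_log_of_mul_self_eq_smul (isHermitian_stabMat hd f χ) (trace_stabMat hinj χ)
    (hf.stabMat_mul_self hd χ),
    Real.log_div (Nat.cast_ne_zero.2 Nat.card_pos.ne') (dim_pos d n).ne', Real.log_pow, neg_sub]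

lemma vnEnt_meanState (hd : Odd d) {σ : Mat d n} (hσ : IsState d n σ) :
    vnEnt (meanState d n σ) = n * Real.log d - Real.log (Nat.card (unitSubgroup hd hσ)) := by
  rw [meanState_eq_stabMat hd hσ,
    (isIsotropic_subtype_unitSubgroup hd hσ).vnEnt_stabMat (AddSubgroup.subtype_injective _) hd]

lemma sum_stabMat (f : G →+ PhaseSpace d n) :
    ∑ χ : AddChar G ℂ, stabMat f χ = (Nat.card G : ℂ) • maxMixed d n := by
  simp only [stabMat, maxMixed, ← Finset.smul_sum]
  rw [Finset.sum_comm, smul_comm]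
  simp only [← Finset.sum_smul, AddChar.sum_apply_eq_ite, ite_smul, zero_smul, Finset.sum_ite_eq',
    Finset.mem_univ, if_true, map_zero, weylOp_zero, Nat.card_eq_fintype_card]

omit [Fintype G] in
lemma IsIsotropic.rescale_comp (hf : IsIsotropic f) (a b : ZMod d) :
    IsIsotropic ((rescale a b).comp f) := fun g h => by
  rw [AddMonoidHom.comp_apply, AddMonoidHom.comp_apply, sympForm_rescale, hf g h, mul_zero]

end Stabilizer

section Convolution

variable {d n : ℕ} [Fact (Nat.Prime d)] {g00 g01 g10 g11 : ZMod d} {ρ σ : Mat d n}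

/-- The linear change of variables on pairs of basis labels with matrix `Gᵀ`. The unitary `convU`
permutes the computational basis by its inverse. -/
noncomputable def convEquiv (hdet : g00 * g11 - g01 * g10 ≠ 0) :
    QV d n × QV d n ≃ QV d n × QV d n where
  toFun kl := (g00 • kl.1 + g10 • kl.2, g01 • kl.1 + g11 • kl.2)
  invFun ij :=
    (fun a => (g00 * g11 - g01 * g10)⁻¹ * g11 * ij.1 a - (g00 * g11 - g01 * g10)⁻¹ * g10 * ij.2 a,
      fun a => -((g00 * g11 - g01 * g10)⁻¹ * g01) * ij.1 a
        + (g00 * g11 - g01 * g10)⁻¹ * g00 * ij.2 a)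
  left_inv kl := by
    have hN := inv_mul_cancel₀ hdet
    ext a <;> simp only [Pi.add_apply, Pi.smul_apply, smul_eq_mul]
    · linear_combination kl.1 a * hN
    · linear_combination kl.2 a * hN
  right_inv ij := by
    have hN := inv_mul_cancel₀ hdet
    ext a <;> simp only [Pi.add_apply, Pi.smul_apply, smul_eq_mul]
    · linear_combination ij.1 a * hN
    · linear_combination ij.2 a * hN

lemma convU_apply (hdet : g00 * g11 - g01 * g10 ≠ 0) (kl ij : QV d n × QV d n) :
    convU d n g00 g01 g10 g11 kl ij = if ij = convEquiv hdet kl then 1 else 0 :=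
  if_congr ((convEquiv hdet).eq_symm_apply.trans eq_comm) rfl rfl

lemma conv_apply (hdet : g00 * g11 - g01 * g10 ≠ 0) (ρ σ : Mat d n) (a a' : QV d n) :
    conv d n g00 g01 g10 g11 ρ σ a a' =
      ∑ b, ρ (g00 • a + g10 • b) (g00 • a' + g10 • b) *
        σ (g01 • a + g11 • b) (g01 • a' + g11 • b) := by
  simp only [conv, ptrB, kron, mul_apply, conjTranspose_apply, convU_apply hdet, of_apply, ite_mul,
    one_mul, zero_mul, Finset.sum_ite_eq', Finset.mem_univ, if_true, apply_ite star, star_one,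
    star_zero, mul_ite, mul_one, mul_zero]
  rfl

/-- The convolution `conv` as a bilinear map. -/
noncomputable def convL (n : ℕ) (hdet : g00 * g11 - g01 * g10 ≠ 0) :
    Mat d n →ₗ[ℂ] Mat d n →ₗ[ℂ] Mat d n :=
  LinearMap.mk₂ ℂ (conv d n g00 g01 g10 g11)
    (fun A B C => by
      ext a b
      simp only [conv_apply hdet, Matrix.add_apply, add_mul, Finset.sum_add_distrib])
    (fun c A B => by
      ext a b
      simp only [conv_apply hdet, Matrix.smul_apply, smul_eq_mul, Finset.mul_sum, mul_assoc])
    (fun A B C => by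
      ext a b
      simp only [conv_apply hdet, Matrix.add_apply, mul_add, Finset.sum_add_distrib])
    (fun c A B => by
      ext a b
      simp only [conv_apply hdet, Matrix.smul_apply, smul_eq_mul, Finset.mul_sum, mul_left_comm])

lemma convL_apply (hdet : g00 * g11 - g01 * g10 ≠ 0) (ρ σ : Mat d n) :
    convL n hdet ρ σ = conv d n g00 g01 g10 g11 ρ σ := rfl

lemma posSemidef_conv (hρ : ρ.PosSemidef) (hσ : σ.PosSemidef) :
    (conv d n g00 g01 g10 g11 ρ σ).PosSemidef := by
  have hkron : (kron ρ σ).PosSemidef := hρ.kronecker hσ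
  have hsum : conv d n g00 g01 g10 g11 ρ σ = ∑ j,
      (convU d n g00 g01 g10 g11 * kron ρ σ * (convU d n g00 g01 g10 g11)ᴴ).submatrix
        (fun i => (i, j)) (fun i => (i, j)) := by
    ext a b
    rw [Matrix.sum_apply]
    rfl
  rw [hsum]
  exact posSemidef_sum _ fun j _ => (hkron.mul_mul_conjTranspose_same _).submatrix _

lemma trace_conv (hdet : g00 * g11 - g01 * g10 ≠ 0) (ρ σ : Mat d n) :
    (conv d n g00 g01 g10 g11 ρ σ).trace = ρ.trace * σ.trace := by
  simp only [trace, diag_apply, conv_apply hdet, Finset.sum_mul_sum, ← Fintype.sum_prod_type']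
  exact (convEquiv hdet).sum_comp fun ij => ρ ij.1 ij.1 * σ ij.2 ij.2

lemma sum_add_smul {g : ZMod d} (hg : g ≠ 0) (a : QV d n) (f : QV d n → ℂ) :
    ∑ b, f (a + g • b) = ∑ b, f b :=
  Equiv.sum_comp ((Equiv.smulRight hg).trans (Equiv.addLeft a)) f

lemma conv_one_right (hdet : g00 * g11 - g01 * g10 ≠ 0) (h01 : g01 ≠ 0) (h10 : g10 ≠ 0)
    (ρ : Mat d n) : conv d n g00 g01 g10 g11 ρ 1 = ρ.trace • 1 := by
  ext a a'
  have hiff (b : QV d n) : g01 • a + g11 • b = g01 • a' + g11 • b ↔ a = a' := by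
    rw [add_left_inj, (smul_right_injective _ h01).eq_iff]
  simp only [conv_apply hdet, Matrix.smul_apply, one_apply, hiff, smul_eq_mul]
  split_ifs with h
  · simp only [h, mul_one, sum_add_smul h10 _ fun b => ρ b b, trace, diag_apply]
  · simp only [mul_zero, Finset.sum_const_zero]

lemma isBistochastic_convL (hdet : g00 * g11 - g01 * g10 ≠ 0) (h01 : g01 ≠ 0) (h10 : g10 ≠ 0)
    (hρ : IsState d n ρ) : IsBistochastic (convL n hdet ρ) where
  map_posSemidef _ hM := posSemidef_conv hρ.1 hM
  trace_map M := by rw [convL_apply, trace_conv hdet, hρ.2, one_mul]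
  map_one := by rw [convL_apply, conv_one_right hdet h01 h10, hρ.2, one_smul]

lemma xi_apply (hd : Odd d) (σ : Mat d n) (v : PhaseSpace d n) :
    xi d n σ v = ∑ c, σ (c + v.2) c *
      ZMod.stdAddChar (-(v.1 ⬝ᵥ c) - (2 : ZMod d)⁻¹ * (v.1 ⬝ᵥ v.2)) := by
  rw [xi_eq_trace, trace, ← Equiv.sum_comp (Equiv.addRight v.2)]
  refine Finset.sum_congr rfl fun c _ => ?_
  have hiff (b : QV d n) : b = c + v.2 + (-v).2 ↔ b = c := by
    rw [Prod.snd_neg, add_neg_cancel_right]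
  simp only [diag_apply, mul_apply, weylOp_apply, Equiv.coe_addRight, hiff, mul_ite, mul_zero,
    Finset.sum_ite_eq', Finset.mem_univ, if_true]
  congr 2
  simp only [Prod.fst_neg, Prod.snd_neg, neg_dotProduct, dotProduct_neg, dotProduct_add]
  linear_combination (v.1 ⬝ᵥ v.2) * inv_two_mul_two hd

lemma conv_weylOp_rescale (hd : Odd d) (hdet : g00 * g11 - g01 * g10 ≠ 0) (h00 : g00 ≠ 0)
    (h11 : g11 ≠ 0) (σ : Mat d n) (v : PhaseSpace d n) :
    conv d n g00 g01 g10 g11 (weylOp (rescale ((g00 * g11 - g01 * g10)⁻¹ * g11) g00 v)) σ =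
      xi d n σ (rescale (-((g00 * g11 - g01 * g10)⁻¹ * g10)) g01 v) • weylOp v := by
  have hN := inv_mul_cancel₀ hdet
  ext a a'
  have hiff (b : QV d n) :
      g00 • a + g10 • b = g00 • a' + g10 • b + g00 • v.2 ↔ a = a' + v.2 := by
    rw [add_right_comm, add_left_inj, ← smul_add, (smul_right_injective _ h00).eq_iff]
  simp only [conv_apply hdet, Matrix.smul_apply, weylOp_apply, rescale_apply, hiff, smul_eq_mul,
    ite_mul, zero_mul, mul_ite, mul_zero]
  split_ifs with h
  · rw [xi_apply hd, Finset.sum_mul]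
    refine (Finset.sum_congr rfl fun b _ => ?_).trans (sum_add_smul h11 (g01 • a') _)
    rw [h, smul_add, add_right_comm, mul_comm, mul_assoc, ← AddChar.map_add_eq_mul]
    congr 2
    simp only [smul_dotProduct, dotProduct_smul, dotProduct_add, smul_eq_mul]
    linear_combination (v.1 ⬝ᵥ a' + (2 : ZMod d)⁻¹ * (v.1 ⬝ᵥ v.2)) * hN
  · exact Finset.sum_const_zero

lemma conv_stabMat (hd : Odd d) (hdet : g00 * g11 - g01 * g10 ≠ 0) (h00 : g00 ≠ 0)
    (h11 : g11 ≠ 0) {G : Type*} [AddCommGroup G] [Fintype G] {f : G →+ PhaseSpace d n}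
    {ξ : AddChar G ℂ}
    (hξ : ∀ g, xi d n σ (rescale (-((g00 * g11 - g01 * g10)⁻¹ * g10)) g01 (f g)) = ξ g)
    (χ : AddChar G ℂ) :
    conv d n g00 g01 g10 g11
        (stabMat ((rescale ((g00 * g11 - g01 * g10)⁻¹ * g11) g00).comp f) χ) σ =
      stabMat f (χ * ξ) := by
  rw [← convL_apply hdet]
  simp only [stabMat, map_smul, map_sum, LinearMap.smul_apply, LinearMap.sum_apply, convL_apply,
    AddMonoidHom.comp_apply, conv_weylOp_rescale hd hdet h00 h11, hξ, smul_smul, AddChar.mul_apply]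

/-- Attained by the uniform ensemble of all the stabilizer states with the labels of `unitSubgroup`,
rescaled so that the convolution sends it to such an ensemble again. -/
lemma sub_vnEnt_meanState_mem_holevoValues (hd : Odd d) (h00 : g00 ≠ 0) (h01 : g01 ≠ 0)
    (h10 : g10 ≠ 0) (h11 : g11 ≠ 0) (hdet : g00 * g11 - g01 * g10 ≠ 0) (hσ : IsState d n σ) :
    n * Real.log d - vnEnt (meanState d n σ) ∈
      holevoValues (fun ρ => conv d n g00 g01 g10 g11 ρ σ) := by
  have hN := inv_ne_zero hdet
  have ha := neg_ne_zero.2 (mul_ne_zero hN h10)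
  have hc := mul_ne_zero hN h11
  let incl := (unitSubgroup hd hσ).subtype
  let out := (rescale (-((g00 * g11 - g01 * g10)⁻¹ * g10))⁻¹ g01⁻¹).comp incl
  have hincl : Function.Injective incl := AddSubgroup.subtype_injective _
  have hout : Function.Injective out :=
    (rescale_injective (inv_ne_zero ha) (inv_ne_zero h01)).comp hincl
  have hiso : IsIsotropic out := (isIsotropic_subtype_unitSubgroup hd hσ).rescale_comp _ _
  have hconv := conv_stabMat (f := out) (ξ := unitChar hd hσ) hd hdet h00 h11 fun u => by
    rw [AddMonoidHom.comp_apply, rescale_rescale_inv ha h01]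
    rfl
  refine sub_mem_holevoValues
    (fun χ => (hiso.rescale_comp _ _).isState_stabMat ((rescale_injective hc h00).comp hout) hd χ)
    (fun χ => ?_) ?_
  · rw [hconv, hiso.vnEnt_stabMat hout hd, vnEnt_meanState hd hσ]
  · have hperm : ∑ χ, stabMat out (χ * unitChar hd hσ) = ∑ χ, stabMat out χ :=
      Equiv.sum_comp (Equiv.mulRight (unitChar hd hσ)) _
    simp only [hconv, hperm, sum_stabMat, Nat.card_eq_fintype_card, AddChar.card_eq]

end Convolution

section CommutingProjections

variable {R : Type*}

lemma mul_list_prod_eq_of_mem [Monoid R] {l : List R} {a : R} (ha : a ∈ l)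
    (hidem : IsIdempotentElem a) (hcomm : ∀ b ∈ l, Commute a b) : a * l.prod = l.prod := by
  obtain ⟨s, t, rfl⟩ := List.append_of_mem ha
  have hs : Commute a s.prod :=
    Commute.list_prod_right _ _ fun b hb => hcomm b (List.mem_append_left _ hb)
  rw [List.prod_append, List.prod_cons, ← mul_assoc, hs.eq, mul_assoc, ← mul_assoc a a, hidem.eq]

lemma isIdempotentElem_list_prod [Monoid R] {l : List R} (hidem : ∀ a ∈ l, IsIdempotentElem a)
    (hcomm : ∀ a ∈ l, ∀ b ∈ l, Commute a b) : IsIdempotentElem l.prod :=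
  (MulAction.stabilizerSubmonoid R l.prod).list_prod_mem fun a ha =>
    mul_list_prod_eq_of_mem ha (hidem a ha) (hcomm a ha)

variable (𝕜 : Type*) [Field 𝕜] [Semiring R] [Algebra 𝕜 R] {d : ℕ} [NeZero d] {a b : R}

/-- The mean of the powers of an element `a` with `a ^ d = 1`: the projection onto the fixed
vectors of `a`. -/
noncomputable def cyclicMean (d : ℕ) [NeZero d] (a : R) : R :=
  (d : 𝕜)⁻¹ • ∑ k : ZMod d, a ^ k.val

lemma mul_cyclicMean (ha : a ^ d = 1) : a * cyclicMean 𝕜 d a = cyclicMean 𝕜 d a := by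
  rw [cyclicMean, mul_smul_comm, Finset.mul_sum]
  congr 1
  refine Fintype.sum_equiv (Equiv.addRight 1) _ _ fun k => ?_
  rw [Equiv.coe_addRight, ZMod.val_add, ZMod.val_one_eq_one_mod, Nat.add_mod_mod,
    ← pow_eq_pow_mod _ ha, pow_succ']

lemma isIdempotentElem_cyclicMean [CharZero 𝕜] (ha : a ^ d = 1) :
    IsIdempotentElem (cyclicMean 𝕜 d a) := by
  have hpow (k : ℕ) : a ^ k * cyclicMean 𝕜 d a = cyclicMean 𝕜 d a :=
    (MulAction.stabilizerSubmonoid R _).pow_mem (mul_cyclicMean 𝕜 ha) k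
  nth_rw 1 [IsIdempotentElem, cyclicMean]
  rw [smul_mul_assoc, Finset.sum_mul]
  simp only [hpow, Finset.sum_const, Finset.card_univ, ZMod.card]
  rw [← Nat.cast_smul_eq_nsmul 𝕜, inv_smul_smul₀ (Nat.cast_ne_zero.2 (NeZero.ne d))]

lemma commute_cyclicMean (hab : Commute a b) :
    Commute (cyclicMean 𝕜 d a) (cyclicMean 𝕜 d b) :=
  (Commute.sum_left _ _ _ fun _ _ => Commute.sum_right _ _ _ fun _ _ =>
    hab.pow_pow _ _).smul_left _ |>.smul_right _

end CommutingProjections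

section MSPS

variable {d n r : ℕ} [Fact (Nat.Prime d)] {v : Fin r → PhaseSpace d n}

/-- The product of the spectral projections of the Weyl operators `weylOp (v i)` for the
eigenvalues `ξ ^ (-x i)`. -/
noncomputable def weylProj (v : Fin r → PhaseSpace d n) (x : Fin r → ZMod d) : Mat d n :=
  (List.ofFn fun i => cyclicMean ℂ d (ch d (x i) • weylOp (v i))).prod

lemma norm_ch (x : ZMod d) : ‖ch d x‖ = 1 := by
  rw [ch_eq_stdAddChar, AddChar.norm_apply]

lemma ch_smul_weylOp_pow_card (hd : Odd d) (x : ZMod d) (u : PhaseSpace d n) :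
    (ch d x • weylOp u) ^ d = 1 := by
  rw [smul_pow, weylOp_pow_card hd, ch_eq_stdAddChar, ← AddChar.map_nsmul_eq_pow, nsmul_eq_mul,
    ZMod.natCast_self, zero_mul, AddChar.map_zero_eq_one, one_smul]

lemma commute_of_mem_weylProj_factors (hcomm : ∀ i j, Commute (weylOp (v i)) (weylOp (v j)))
    (x : Fin r → ZMod d) :
    ∀ a ∈ List.ofFn fun i => cyclicMean ℂ d (ch d (x i) • weylOp (v i)),
      ∀ b ∈ List.ofFn fun i => cyclicMean ℂ d (ch d (x i) • weylOp (v i)), Commute a b := by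
  simp only [List.forall_mem_ofFn_iff]
  exact fun i j => commute_cyclicMean ℂ (((hcomm i j).smul_left _).smul_right _)

lemma isIdempotentElem_weylProj (hd : Odd d)
    (hcomm : ∀ i j, Commute (weylOp (v i)) (weylOp (v j))) (x : Fin r → ZMod d) :
    IsIdempotentElem (weylProj v x) := by
  refine isIdempotentElem_list_prod ?_ (commute_of_mem_weylProj_factors hcomm x)
  simp only [List.forall_mem_ofFn_iff]
  exact fun i => isIdempotentElem_cyclicMean ℂ (ch_smul_weylOp_pow_card hd _ _)

lemma weylOp_mul_weylProj (hd : Odd d) (hcomm : ∀ i j, Commute (weylOp (v i)) (weylOp (v j)))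
    (x : Fin r → ZMod d) (i : Fin r) :
    weylOp (v i) * weylProj v x = (ch d (x i))⁻¹ • weylProj v x := by
  have hcard := ch_smul_weylOp_pow_card hd (x i) (v i)
  have hmem := (List.mem_ofFn' (fun i => cyclicMean ℂ d (ch d (x i) • weylOp (v i))) _).2 ⟨i, rfl⟩
  have habsorb := mul_list_prod_eq_of_mem hmem (isIdempotentElem_cyclicMean ℂ hcard)
    (commute_of_mem_weylProj_factors hcomm x _ hmem)
  have hch : ch d (x i) ≠ 0 := norm_ne_zero_iff.1 (by rw [norm_ch]; exact one_ne_zero)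
  rw [eq_inv_smul_iff₀ hch, ← smul_mul_assoc, weylProj, ← habsorb, ← mul_assoc,
    mul_cyclicMean ℂ hcard]

lemma IsMSPS.vnEnt_meanState_le {σ : Mat d n} (h : IsMSPS d n σ) (hd : Odd d)
    (hσ : IsState d n σ) : vnEnt (meanState d n σ) ≤ vnEnt σ := by
  obtain ⟨r, hr, p, q, x, hcomm, hcard, hσeq⟩ := h
  let v i : PhaseSpace d n := (p i, q i)
  replace hcomm : ∀ i j, Commute (weylOp (v i)) (weylOp (v j)) := hcomm
  replace hσeq : σ = ((d : ℂ) ^ (n - r))⁻¹ • weylProj v x := hσeq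
  have hsq : σ * σ = ((((d : ℝ) ^ (n - r))⁻¹ : ℝ) : ℂ) • σ := by
    rw [hσeq, smul_mul_smul_comm, (isIdempotentElem_weylProj hd hcomm x).eq, smul_smul]
    push_cast
    rfl
  have hent : vnEnt σ = n * Real.log d - r * Real.log d := by
    rw [vnEnt_eq_neg_log_of_mul_self_eq_smul hσ.1.1 hσ.2 hsq, Real.log_inv, neg_neg, Real.log_pow,
      Nat.cast_sub hr, sub_mul]
  have hmem i : v i ∈ unitSubgroup hd hσ := by
    refine mem_unitSubgroup_of_weylOp_mul_eq_smul (c := (ch d (x i))⁻¹) ?_ ?_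
    · rw [norm_inv, norm_ch, inv_one]
    · rw [hσeq, mul_smul_comm, weylOp_mul_weylProj hd hcomm, smul_comm]
  have hle : (d : ℝ) ^ r ≤ Nat.card (unitSubgroup hd hσ) := by
    exact_mod_cast hcard ▸ AddSubgroup.card_le_of_le
      ((AddSubgroup.closure_le _).2 (Set.range_subset_iff.2 hmem))
  rw [hent, vnEnt_meanState hd hσ, ← Real.log_pow _ r]
  exact sub_le_sub_left (Real.log_le_log (dim_pos d r) hle) _

end MSPS

/-- Holevo capacity bounds: for every state `σ`,
`n log d - H(M(σ)) ≤ χ(E_σ) ≤ n log d - H(σ)`, and if `σ` is an MSPS then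
`χ(E_σ) = n log d - H(σ)`, where `E_σ : ρ ↦ ρ ⊠ σ`. -/
theorem statement16 (d n : ℕ) [Fact (Nat.Prime d)] (hd : Odd d) (hn : 1 ≤ n)
    (g00 g01 g10 g11 : ZMod d) (h00 : g00 ≠ 0) (h01 : g01 ≠ 0)
    (h10 : g10 ≠ 0) (h11 : g11 ≠ 0) (hdet : g00 * g11 - g01 * g10 ≠ 0)
    (σ : Mat d n) (hσ : IsState d n σ) :
    ((n : ℝ) * Real.log d - vnEnt (meanState d n σ) ≤
        holevoCap d n (fun ρ => conv d n g00 g01 g10 g11 ρ σ) ∧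
      holevoCap d n (fun ρ => conv d n g00 g01 g10 g11 ρ σ) ≤
        (n : ℝ) * Real.log d - vnEnt σ) ∧
    (IsMSPS d n σ →
      holevoCap d n (fun ρ => conv d n g00 g01 g10 g11 ρ σ) =
        (n : ℝ) * Real.log d - vnEnt σ) := by
  have hupper : (n : ℝ) * Real.log d - vnEnt σ ∈
      upperBounds (holevoValues fun ρ => conv d n g00 g01 g10 g11 ρ σ) :=
    mem_upperBounds_holevoValues
      (fun ρ hρ => (isBistochastic_convL hdet h01 h10 hρ).isState hσ)
      (fun ρ hρ => (isBistochastic_convL hdet h01 h10 hρ).vnEnt_le hσ.1)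
  have hcap := isLUB_holevoCap ⟨_, hupper⟩
  have hlower := hcap.1 (sub_vnEnt_meanState_mem_holevoValues hd h00 h01 h10 h11 hdet hσ)
  refine ⟨⟨hlower, hcap.2 hupper⟩, fun hmsps => le_antisymm (hcap.2 hupper) ?_⟩
  exact (sub_le_sub_left (hmsps.vnEnt_meanState_le hd hσ) _).trans hlower

end PaperQI
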